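/- A quiver Q satisfies Condition (L) (every cycle has an exit) if and only if its Kronecker square Q̂ satisfies Condition (L). -/

import Mathlib

structure Quiv where
  V : Type
  E : Type
  s : E → V
  r : E → V

namespace Quiv

def kron (Q Q' : Quiv) : Quiv :=
  ⟨Q.V × Q'.V, Q.E × Q'.E, fun e => (Q.s e.1, Q'.s e.2), fun e => (Q.r e.1, Q'.r e.2)⟩

def IsSink (Q : Quiv) (v : Q.V) : Prop := ∀ e, Q.s e ≠ v

def IsSource (Q : Quiv) (v : Q.V) : Prop := ∀ e, Q.r e ≠ v

def Isolated (Q : Quiv) (v : Q.V) : Prop := Q.IsSink v ∧ Q.IsSource v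

inductive Reach (Q : Quiv) : Q.V → Q.V → Prop
  | refl (v : Q.V) : Reach Q v v
  | step (e : Q.E) {v : Q.V} : Reach Q (Q.r e) v → Reach Q (Q.s e) v

inductive PathN (Q : Quiv) : ℕ → Q.V → Q.V → Prop
  | nil (v : Q.V) : PathN Q 0 v v
  | cons (e : Q.E) {n : ℕ} {v : Q.V} : PathN Q n (Q.r e) v → PathN Q (n + 1) (Q.s e) v

def IsClosedPath (Q : Quiv) (l : List Q.E) : Prop :=
  l ≠ [] ∧ l.Chain' (fun e f => Q.r e = Q.s f) ∧
    l.getLast?.map Q.r = l.head?.map Q.s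

def IsCycle (Q : Quiv) (l : List Q.E) : Prop :=
  Q.IsClosedPath l ∧ (l.map Q.s).Nodup

end Quiv

namespace Quiv

/-- A path has an exit if some arrow departs from a source vertex of one of its
arrows and differs from that arrow. -/
def HasExit (Q : Quiv) (l : List Q.E) : Prop :=
  ∃ e' ∈ l, ∃ e : Q.E, Q.s e = Q.s e' ∧ e ≠ e'

/-- Condition (L): every cycle has an exit. -/
def ConditionL (Q : Quiv) : Prop := ∀ l : List Q.E, Q.IsCycle l → Q.HasExit l

end Quiv

theorem exists_dup_split {α β : Type} (s : α → β) (l : List α) (h : ¬ (l.map s).Nodup) :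
    ∃ a e b f c, l = a ++ ((e :: b) ++ (f :: c)) ∧ s e = s f := by
  induction l with
  | nil => simp at h
  | cons x l ih =>
    by_cases hl : (l.map s).Nodup
    · have hx : s x ∈ l.map s := by
        by_contra hx
        exact h (by rw [List.map_cons, List.nodup_cons]; exact ⟨hx, hl⟩)
      obtain ⟨f, hf, hfx⟩ := List.mem_map.1 hx
      obtain ⟨b, c, rfl⟩ := List.append_of_mem hf
      exact ⟨[], x, b, f, c, by simp, hfx.symm⟩
    · obtain ⟨a, e, b, f, c, rfl, hs⟩ := ih hl
      exact ⟨x :: a, e, b, f, c, by simp, hs⟩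

theorem closedPath_contains_cycle (Q : Quiv) (n : ℕ) : ∀ l : List Q.E, l.length ≤ n →
    Q.IsClosedPath l → ∃ c, Q.IsCycle c ∧ c ⊆ l := by
  induction n with
  | zero =>
    intro l hn hl
    exact absurd (List.length_eq_zero_iff.1 (Nat.le_zero.1 hn)) hl.1
  | succ n ih =>
    intro l hn hl
    by_cases hd : (l.map Q.s).Nodup
    · exact ⟨l, ⟨hl, hd⟩, fun _ h => h⟩
    · obtain ⟨a, e, b, f, c, rfl, hs⟩ := exists_dup_split Q.s l hd
      have h1 := (List.isChain_append.1 hl.2.1).2.1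
      obtain ⟨h2, -, h3⟩ := List.isChain_append.1 h1
      obtain ⟨d, hd, hsub⟩ := ih (e :: b) (by simp at hn ⊢; omega) (by
        refine ⟨by simp, h2, ?_⟩
        have hne : e :: b ≠ [] := by simp
        rw [List.getLast?_eq_some_getLast hne]
        have := h3 _ (List.getLast?_eq_some_getLast hne) f (by simp)
        simp [this, hs])
      exact ⟨d, hd, fun x hx => by
        have := hsub hx
        rw [List.mem_append, List.mem_append]
        exact Or.inr (Or.inl this)⟩

/-- A quiver satisfies Condition (L) iff its Kronecker square satisfies Condition (L). -/
theorem kron_conditionL_iff (Q : Quiv) :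
    Q.ConditionL ↔ (Q.kron Q).ConditionL := by
  constructor
  · intro h l hl
    obtain ⟨⟨hne, hch, hlast⟩, -⟩ := hl
    let p : (Q.kron Q).E → Q.E := fun x => x.1
    have hcl : Q.IsClosedPath (l.map p) := by
      refine ⟨by simpa using hne, ?_, ?_⟩
      · refine (List.isChain_map p).2 (hch.imp ?_)
        intro x y hxy
        exact congrArg Prod.fst hxy
      · have := congrArg (Option.map (Prod.fst : Q.V × Q.V → Q.V)) hlast
        rw [List.getLast?_map, List.head?_map, Option.map_map, Option.map_map]
        erw [Option.map_map, Option.map_map] at this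
        exact this
    obtain ⟨c, hc, hsub⟩ := closedPath_contains_cycle Q _ _ le_rfl hcl
    obtain ⟨e', he', e, hs, hne'⟩ := h c hc
    obtain ⟨x, hx, rfl⟩ := List.mem_map.1 (hsub he')
    exact ⟨x, hx, (e, x.2), Prod.ext hs rfl, fun hh => hne' (congrArg Prod.fst hh)⟩
  · intro h l hl
    obtain ⟨⟨hne, hch, hlast⟩, hnd⟩ := hl
    let d : Q.E → (Q.kron Q).E := fun x => (x, x)
    let dv : Q.V → (Q.kron Q).V := fun x => (x, x)
    have hcy : (Q.kron Q).IsCycle (l.map d) := by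
      refine ⟨⟨by simpa using hne, ?_, ?_⟩, ?_⟩
      · refine (List.isChain_map d).2 (hch.imp ?_)
        intro x y hxy
        exact Prod.ext hxy hxy
      · have := congrArg (Option.map dv) hlast
        rw [List.getLast?_map, List.head?_map, Option.map_map, Option.map_map]
        rw [Option.map_map, Option.map_map] at this
        exact this
      · have := hnd.map (f := dv) (fun x y hxy => congrArg Prod.fst hxy)
        rw [List.map_map] at this ⊢
        exact this
    obtain ⟨x, hx, g, hs, hg⟩ := h _ hcy
    obtain ⟨e, he, rfl⟩ := List.mem_map.1 hx
    by_cases h1 : g.1 = e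
    · exact ⟨e, he, g.2, congrArg Prod.snd hs, fun h2 => hg (Prod.ext h1 h2)⟩
    · exact ⟨e, he, g.1, congrArg Prod.fst hs, h1⟩
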